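/- arXiv:0710.5226 — 2 statements merged into one kernel-verified Lean document; each statement's English description precedes it below -/
import Mathlib

section
/- Reverse Hölder inequality for measurable functions: let (Ω, 𝒜, μ) be a measure space, let r, s ∈ ℝ \ {0} with r < 0 < s and 1 = 1/r + 1/s. Then for all measurable functions f, g : Ω → [0, ∞] one has ∫ f·g dμ ≥ (∫ f^r dμ)^{1/r} · (∫ g^s dμ)^{1/s}, where integrals are Lebesgue lower integrals with values in [0, ∞], powers are extended-nonnegative-real powers (so 0^{negative} = ∞, ∞^{negative} = 0), and ∞·0 = 0. (Corollary 3.) -/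
open MeasureTheory

/-- If `a` is nonzero and `a * b` is finite, then `b ^ s` factors through `a * b`. -/
lemma ENNReal.rpow_eq_mul_rpow_mul_rpow_neg {a b : ENNReal} {s : ℝ} (hs : 0 < s)
    (ha : a ≠ 0) (hab : a * b ≠ ⊤) : b ^ s = (a * b) ^ s * a ^ (-s) := by
  rcases eq_or_ne a ⊤ with rfl | hat
  · obtain rfl : b = 0 := by
      by_contra hb
      exact hab (ENNReal.top_mul hb)
    simp [hs]
  · rw [ENNReal.mul_rpow_of_nonneg _ _ hs.le, mul_right_comm, ENNReal.rpow_neg,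
      ENNReal.mul_inv_cancel, one_mul]
    · exact (ENNReal.rpow_pos (pos_iff_ne_zero.mpr ha) hat).ne'
    · exact ENNReal.rpow_ne_top_of_nonneg hs.le hat

/-- Corollary 3 (reverse Hölder inequality): for `r < 0 < s` with
`1 = 1/r + 1/s` and measurable `f, g : Ω → [0,∞]`,
`∫ f·g dμ ≥ (∫ f^r dμ)^{1/r} · (∫ g^s dμ)^{1/s}` (with the `ℝ≥0∞` conventions
`0^p = ∞`, `∞^p = 0` for `p < 0`, and `∞·0 = 0`). -/
theorem stmt17 {Ω : Type*} [MeasurableSpace Ω] (μ : Measure Ω)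
    (r s : ℝ) (hr : r < 0) (hs : 0 < s) (hrs : 1 = 1 / r + 1 / s)
    (f g : Ω → ENNReal) (hf : Measurable f) (hg : Measurable g) :
    (∫⁻ ω, f ω ^ r ∂μ) ^ (1 / r) * (∫⁻ ω, g ω ^ s ∂μ) ^ (1 / s) ≤
      ∫⁻ ω, f ω * g ω ∂μ := by
  have hr_inv : 1 / r < 0 := one_div_neg.mpr hr
  rcases eq_or_ne (∫⁻ ω, f ω * g ω ∂μ) ⊤ with hC | hC
  · simp [hC]
  rcases eq_or_ne (∫⁻ ω, f ω ^ r ∂μ) ⊤ with hA | hA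
  · simp only [hA, ENNReal.top_rpow_of_neg hr_inv, zero_mul, zero_le]
  have hrs_mul : r * s = s + r := by
    have := hr.ne
    field_simp at hrs
    linarith
  have hs_lt : s < 1 := by nlinarith
  have hpq : (1 / s).HolderConjugate (1 / (1 - s)) := by
    rw [Real.holderConjugate_iff]
    exact ⟨by rwa [one_lt_div hs], by simp⟩
  have hfactor : ∀ᵐ ω ∂μ, g ω ^ s = (f ω * g ω) ^ s * f ω ^ (-s) := by
    filter_upwards [ae_lt_top (hf.mul hg) hC, ae_lt_top (hf.pow_const r) hA] with ω h₁ h₂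
    refine ENNReal.rpow_eq_mul_rpow_mul_rpow_neg hs (fun h₀ => ?_) h₁.ne
    simp [h₀, ENNReal.zero_rpow_of_neg hr] at h₂
  have hexp : -s * (1 / (1 - s)) = r := by
    have : 1 - s ≠ 0 := by linarith
    field_simp
    linarith
  have hexp' : (1 - s) * (1 / s) = -(1 / r) := by
    have : s * (1 / s) = 1 := mul_one_div_cancel hs.ne'
    linarith
  have hB : ∫⁻ ω, g ω ^ s ∂μ ≤
      (∫⁻ ω, f ω * g ω ∂μ) ^ s * (∫⁻ ω, f ω ^ r ∂μ) ^ (1 - s) := by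
    rw [lintegral_congr_ae hfactor]
    have key := ENNReal.lintegral_mul_le_Lp_mul_Lq μ hpq
      ((hf.mul hg).pow_const s).aemeasurable (hf.pow_const (-s)).aemeasurable
    simpa only [Pi.mul_apply, ← ENNReal.rpow_mul, hexp, mul_one_div_cancel hs.ne',
      ENNReal.rpow_one, one_div_one_div] using key
  calc (∫⁻ ω, f ω ^ r ∂μ) ^ (1 / r) * (∫⁻ ω, g ω ^ s ∂μ) ^ (1 / s)
      ≤ (∫⁻ ω, f ω ^ r ∂μ) ^ (1 / r) *
          ((∫⁻ ω, f ω * g ω ∂μ) ^ s * (∫⁻ ω, f ω ^ r ∂μ) ^ (1 - s)) ^ (1 / s) := by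
        gcongr
    _ = (∫⁻ ω, f ω * g ω ∂μ) *
          ((∫⁻ ω, f ω ^ r ∂μ) ^ (1 / r) * ((∫⁻ ω, f ω ^ r ∂μ) ^ (1 / r))⁻¹) := by
        rw [ENNReal.mul_rpow_of_nonneg _ _ (one_div_pos.mpr hs).le, ← ENNReal.rpow_mul,
          ← ENNReal.rpow_mul, hexp', mul_one_div_cancel hs.ne', ENNReal.rpow_one,
          ENNReal.rpow_neg, mul_left_comm]
    _ ≤ ∫⁻ ω, f ω * g ω ∂μ := mul_le_of_le_one_right' (ENNReal.mul_inv_le_one _)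
end

section
/- Generalized Hölder inequality for measurable functions, second direction: let (Ω, 𝒜, μ) be a measure space, let r, s, t ∈ ℝ with r·s·t ≠ 0 and 1/t = 1/r + 1/s, and suppose t > r and t > s. Then for all measurable functions f, g : Ω → [0, ∞] one has (∫ (f·g)^t dμ)^{1/t} ≥ (∫ f^r dμ)^{1/r} · (∫ g^s dμ)^{1/s}, where integrals are Lebesgue lower integrals with values in [0, ∞] and powers are extended-nonnegative-real powers (so 0^{negative} = ∞, ∞^{negative} = 0, ∞·0 = 0). (Theorem 3, second implication.) -/
open MeasureTheory

/-- If the integral of a negative power of `f` is finite, then `f` is almost everywhere nonzero. -/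
lemma ae_ne_zero_of_lintegral_rpow_ne_top {Ω : Type*} [MeasurableSpace Ω] {μ : Measure Ω}
    {r : ℝ} (hr : r < 0) {f : Ω → ENNReal} (hf : Measurable f)
    (hfin : ∫⁻ ω, f ω ^ r ∂μ ≠ ⊤) : ∀ᵐ ω ∂μ, f ω ≠ 0 := by
  filter_upwards [ae_lt_top (hf.pow_const r) hfin] with ω hω h0
  simp [h0, ENNReal.zero_rpow_of_neg hr] at hω

/-- Reverse Hölder inequality with a positive target exponent and one negative exponent. -/
lemma lintegral_rpow_mul_le_of_pos_of_neg {Ω : Type*} [MeasurableSpace Ω] (μ : Measure Ω)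
    {r s t : ℝ} (hr : 0 < r) (hs : s < 0) (ht : 0 < t) (h : 1 / t = 1 / r + 1 / s)
    (hrt : r < t) {f g : Ω → ENNReal} (hf : Measurable f) (hg : Measurable g) :
    (∫⁻ ω, f ω ^ r ∂μ) ^ (1 / r) * (∫⁻ ω, g ω ^ s ∂μ) ^ (1 / s) ≤
      (∫⁻ ω, (f ω * g ω) ^ t ∂μ) ^ (1 / t) := by
  by_cases hB : ∫⁻ ω, g ω ^ s ∂μ = ⊤
  · simp [hB, ENNReal.top_rpow_of_neg (inv_lt_zero.2 hs)]
  by_cases hC : ∫⁻ ω, (f ω * g ω) ^ t ∂μ = ⊤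
  · simp [hC, ENNReal.top_rpow_of_pos (inv_pos.2 ht)]
  have hle : ∀ᵐ ω ∂μ, f ω ^ r ≤ (f * g * g⁻¹) ω ^ r := by
    filter_upwards [ae_ne_zero_of_lintegral_rpow_ne_top hs hg hB,
      ae_lt_top ((hf.mul hg).pow_const t) hC] with ω h0 hfin
    refine ENNReal.rpow_le_rpow ?_ hr.le
    rw [Pi.mul_apply, Pi.mul_apply, Pi.inv_apply]
    by_cases hg' : g ω = ⊤
    · by_cases hf' : f ω = 0
      · simp [hf']
      · simp [hg', hf', ENNReal.mul_top, ENNReal.top_rpow_of_pos ht] at hfin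
    · rw [mul_assoc, ENNReal.mul_inv_cancel h0 hg', mul_one]
  have key := ENNReal.lintegral_Lp_mul_le_Lq_mul_Lr (q := t) (r := -s) hr hrt
    (by rw [h, one_div_neg_eq_neg_one_div]; ring) μ (hf.mul hg).aemeasurable hg.inv.aemeasurable
  have key' := (ENNReal.rpow_le_rpow (lintegral_mono_ae hle) (one_div_pos.2 hr).le).trans key
  simp only [Pi.mul_apply, Pi.inv_apply, ENNReal.inv_rpow, ENNReal.rpow_neg, inv_inv,
    one_div_neg_eq_neg_one_div] at key'
  have := ENNReal.div_le_of_le_mul key'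
  rwa [div_eq_mul_inv, inv_inv] at this

/-- Reverse Hölder inequality with all exponents negative. -/
lemma lintegral_rpow_mul_le_of_neg {Ω : Type*} [MeasurableSpace Ω] (μ : Measure Ω)
    {r s t : ℝ} (hr : r < 0) (hs : s < 0) (ht : t < 0) (h : 1 / t = 1 / r + 1 / s)
    (hrt : r < t) {f g : Ω → ENNReal} (hf : Measurable f) (hg : Measurable g) :
    (∫⁻ ω, f ω ^ r ∂μ) ^ (1 / r) * (∫⁻ ω, g ω ^ s ∂μ) ^ (1 / s) ≤
      (∫⁻ ω, (f ω * g ω) ^ t ∂μ) ^ (1 / t) := by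
  by_cases hA : ∫⁻ ω, f ω ^ r ∂μ = ⊤
  · simp [hA, ENNReal.top_rpow_of_neg (inv_lt_zero.2 hr)]
  by_cases hB : ∫⁻ ω, g ω ^ s ∂μ = ⊤
  · simp [hB, ENNReal.top_rpow_of_neg (inv_lt_zero.2 hs)]
  have heq : ∫⁻ ω, (f⁻¹ * g⁻¹) ω ^ (-t) ∂μ =
      ∫⁻ ω, (f ω * g ω) ^ t ∂μ := by
    refine lintegral_congr_ae ?_
    filter_upwards [ae_ne_zero_of_lintegral_rpow_ne_top hr hf hA,
      ae_ne_zero_of_lintegral_rpow_ne_top hs hg hB] with ω hf0 hg0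
    rw [Pi.mul_apply, Pi.inv_apply, Pi.inv_apply, ← ENNReal.mul_inv (Or.inl hf0) (Or.inr hg0),
      ENNReal.inv_rpow, ENNReal.rpow_neg, inv_inv]
  have key := ENNReal.lintegral_Lp_mul_le_Lq_mul_Lr (p := -t) (q := -r) (r := -s)
    (neg_pos.2 ht) (neg_lt_neg hrt)
    (by simp only [one_div_neg_eq_neg_one_div]; rw [h]; ring) μ
    hf.inv.aemeasurable hg.inv.aemeasurable
  rw [heq] at key
  simp only [Pi.inv_apply, ENNReal.inv_rpow, ENNReal.rpow_neg, inv_inv,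
    one_div_neg_eq_neg_one_div] at key
  have hA' : (∫⁻ ω, f ω ^ r ∂μ) ^ (1 / r) ≠ 0 := by
    simp [ENNReal.rpow_eq_zero_iff, hA, hr.le]
  have hB' : (∫⁻ ω, g ω ^ s ∂μ) ^ (1 / s) ≠ 0 := by
    simp [ENNReal.rpow_eq_zero_iff, hB, hs.le]
  rwa [← ENNReal.mul_inv (Or.inl hA') (Or.inr hB'), ENNReal.inv_le_inv] at key

/-- Theorem 3, second implication (generalized Hölder inequality for measurable
functions): if `r·s·t ≠ 0`, `1/t = 1/r + 1/s` and `t > r`, `t > s`, then for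
measurable `f, g : Ω → [0,∞]`,
`(∫ (f·g)^t dμ)^{1/t} ≥ (∫ f^r dμ)^{1/r} · (∫ g^s dμ)^{1/s}`. -/
theorem stmt19 {Ω : Type*} [MeasurableSpace Ω] (μ : Measure Ω)
    (r s t : ℝ) (h0 : r * s * t ≠ 0) (h : 1 / t = 1 / r + 1 / s)
    (hrt : r < t) (hst : s < t)
    (f g : Ω → ENNReal) (hf : Measurable f) (hg : Measurable g) :
    (∫⁻ ω, f ω ^ r ∂μ) ^ (1 / r) * (∫⁻ ω, g ω ^ s ∂μ) ^ (1 / s) ≤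
      (∫⁻ ω, (f ω * g ω) ^ t ∂μ) ^ (1 / t) := by
  have ht0 : t ≠ 0 := right_ne_zero_of_mul h0
  have hs0 : s ≠ 0 := right_ne_zero_of_mul (left_ne_zero_of_mul h0)
  rcases ht0.lt_or_gt with ht | ht
  · exact lintegral_rpow_mul_le_of_neg μ (hrt.trans ht) (hst.trans ht) ht h hrt hf hg
  rcases hs0.lt_or_gt with hs | hs
  · have hr : 0 < r := by
      have h1 := one_div_pos.2 ht
      have h2 := one_div_neg.2 hs
      exact one_div_pos.1 (by linarith)
    exact lintegral_rpow_mul_le_of_pos_of_neg μ hr hs ht h hrt hf hg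
  · have hr : r < 0 := by
      have h1 := one_div_lt_one_div_of_lt hs hst
      exact one_div_neg.1 (by linarith)
    have := lintegral_rpow_mul_le_of_pos_of_neg μ hs hr ht (h.trans (add_comm _ _)) hst hg hf
    simpa only [mul_comm] using this
end
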